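/- Proposition 6: Let n ≥ 5, let ψ be a pure n-qubit state satisfying the preferred-basis condition, and let m be an integer with 1 ≤ m ≤ ⌊n/2⌋ - 1. If M(ρ_ψ) > C(m,2) + C(n-m,2) + δ_{m,2}, then ψ contains entanglement between at least m+1 qubits: ψ cannot be written (over any partition of the n qubits into nonempty blocks) as a tensor product of pure states each involving at most m qubits. -/

import Mathlib

noncomputable def pauli : ℕ → Matrix (Fin 2) (Fin 2) ℂ
  | 1 => !![0, 1; 1, 0]
  | 2 => !![0, -Complex.I; Complex.I, 0]
  | 3 => !![1, 0; 0, -1]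
  | _ => 1

/-- The `ι`-fold Kronecker product of single-qubit operators `pauli (f k)`. -/
noncomputable def kronOp {ι : Type*} [Fintype ι] [DecidableEq ι] (f : ι → ℕ) :
    Matrix (ι → Fin 2) (ι → Fin 2) ℂ :=
  Matrix.of fun x y => ∏ k, pauli (f k) (x k) (y k)

/-- Two-body correlation `T^{kl}_{ij}(ρ)`. -/
noncomputable def corr {ι : Type*} [Fintype ι] [DecidableEq ι]
    (ρ : Matrix (ι → Fin 2) (ι → Fin 2) ℂ) (k l : ι) (i j : ℕ) : ℝ :=
  ((ρ * kronOp (fun q => if q = k then i else if q = l then j else 0)).trace).re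

/-- Single-qubit Bloch vector component `b^{(q)}_i(ρ)`. -/
noncomputable def bloch {ι : Type*} [Fintype ι] [DecidableEq ι]
    (ρ : Matrix (ι → Fin 2) (ι → Fin 2) ℂ) (q : ι) (i : ℕ) : ℝ :=
  ((ρ * kronOp (fun p => if p = q then i else 0)).trace).re

/-- `M_{kl}(ρ)`. -/
noncomputable def Mkl {ι : Type*} [Fintype ι] [DecidableEq ι]
    (ρ : Matrix (ι → Fin 2) (ι → Fin 2) ℂ) (k l : ι) : ℝ :=
  ∑ i ∈ Finset.Icc 1 2, ∑ j ∈ Finset.Icc 1 2, (corr ρ k l i j) ^ 2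

/-- `M(ρ) = Σ_{k<l} M_{kl}(ρ)`. -/
noncomputable def Mtot {ι : Type*} [Fintype ι] [LinearOrder ι]
    (ρ : Matrix (ι → Fin 2) (ι → Fin 2) ℂ) : ℝ :=
  ∑ p ∈ Finset.univ.filter (fun p : ι × ι => p.1 < p.2), Mkl ρ p.1 p.2

/-- Density matrix of a pure state `ψ`: `ρ_ψ = ψ ψ†`. -/
noncomputable def pureDensity {ι : Type*} [Fintype ι] [DecidableEq ι]
    (ψ : (ι → Fin 2) → ℂ) : Matrix (ι → Fin 2) (ι → Fin 2) ℂ :=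
  Matrix.of fun x y => ψ x * (starRingEnd ℂ) (ψ y)

/-- `ψ` is a unit vector. -/
def UnitVec {ι : Type*} [Fintype ι] [DecidableEq ι] (ψ : (ι → Fin 2) → ℂ) : Prop :=
  ∑ x, Complex.normSq (ψ x) = 1

/-- Preferred-basis condition: all transverse Bloch components vanish. -/
def PreferredBasis {ι : Type*} [Fintype ι] [DecidableEq ι]
    (ρ : Matrix (ι → Fin 2) (ι → Fin 2) ℂ) : Prop :=
  ∀ q : ι, bloch ρ q 1 = 0 ∧ bloch ρ q 2 = 0

/-- `P` is a partition of `Fin n` into `k` nonempty blocks. -/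
def IsPartition {n k : ℕ} (P : Fin k → Finset (Fin n)) : Prop :=
  (∀ m, (P m).Nonempty) ∧ (∀ m m', m ≠ m' → Disjoint (P m) (P m')) ∧
    ∀ q : Fin n, ∃ m, q ∈ P m

/-- Restriction of an `n`-bit string to a block of qubits. -/
def restrictB {n : ℕ} (S : Finset (Fin n)) (f : Fin n → Fin 2) : (↥S → Fin 2) :=
  fun q => f q.val

/-- `ψ` is the tensor product, under the canonical qubit-reordering isomorphism,
of pure states on the blocks of `P`. -/
def IsProductOver {n k : ℕ} (ψ : (Fin n → Fin 2) → ℂ) (P : Fin k → Finset (Fin n)) : Prop :=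
  ∃ φ : (m : Fin k) → ((↥(P m) → Fin 2) → ℂ),
    (∀ m, UnitVec (φ m)) ∧ ∀ f : Fin n → Fin 2, ψ f = ∏ m, φ m (restrictB (P m) f)

/-- Expectation of an operator in the vector `ψ`. -/
noncomputable def ex {X : Type*} [Fintype X] (ψ : X → ℂ) (A : Matrix X X ℂ) : ℂ :=
  star ψ ⬝ᵥ (A.mulVec ψ)

open Matrix in
lemma ex_star {X : Type*} [Fintype X] (ψ : X → ℂ) (A : Matrix X X ℂ) :
    star (ex ψ A) = ex ψ Aᴴ := by
  unfold ex
  rw [Matrix.star_dotProduct, star_star, Matrix.star_mulVec, Matrix.dotProduct_mulVec]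

open Matrix in
lemma bessel {X : Type*} [Fintype X] [DecidableEq X] (ψ : X → ℂ) (h1 : ex ψ 1 = 1)
    {κ : Type*} [Fintype κ] (A : κ → Matrix X X ℂ) (hH : ∀ i, (A i)ᴴ = A i)
    (hs : ∀ i, A i * A i = 1) (ha : ∀ i j, i ≠ j → A i * A j = - (A j * A i)) :
    ∑ i, (ex ψ (A i)).re ^ 2 ≤ 1 := by
  have key : ∀ B C : Matrix X X ℂ,
      inner ℝ (WithLp.toLp 2 (B *ᵥ ψ) : EuclideanSpace ℂ X) (WithLp.toLp 2 (C *ᵥ ψ)) =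
        (ex ψ (Bᴴ * C)).re := by
    intro B C
    have e : inner ℝ (WithLp.toLp 2 (B *ᵥ ψ) : EuclideanSpace ℂ X) (WithLp.toLp 2 (C *ᵥ ψ))
        = ((C *ᵥ ψ) ⬝ᵥ star (B *ᵥ ψ)).re := by
      simp only [PiLp.inner_apply, Complex.inner, dotProduct, Complex.re_sum]
      refine Finset.sum_congr rfl fun x _ => ?_
      simp only [Pi.star_apply, Complex.star_def, Complex.mul_re, Complex.conj_re, Complex.conj_im]
    rw [e, ex, ← Matrix.mulVec_mulVec,
      Matrix.star_mulVec, dotProduct_comm, Matrix.dotProduct_mulVec (star ψ)]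
  have ho : Orthonormal ℝ (fun i => (WithLp.toLp 2 (A i *ᵥ ψ) : EuclideanSpace ℂ X)) := by
    classical
    rw [orthonormal_iff_ite]
    intro i j
    rw [key, hH]
    split_ifs with h
    · subst h; rw [hs, h1]; simp
    · have e1 := ex_star ψ (A i * A j)
      rw [Matrix.conjTranspose_mul, hH, hH] at e1
      have e2 : ex ψ (A i * A j) = - ex ψ (A j * A i) := by
        rw [ha i j h]; simp [ex, Matrix.neg_mulVec]
      have e3 := congrArg Complex.re e1
      have e4 := congrArg Complex.re e2
      simp at e3 e4
      linarith
  have hb := ho.sum_inner_products_le (WithLp.toLp 2 ((1 : Matrix X X ℂ) *ᵥ ψ)) (s := Finset.univ)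
  rw [← real_inner_self_eq_norm_sq] at hb
  simp only [key, hH] at hb
  simpa [h1] using hb

lemma pauli_herm (i : ℕ) (a b : Fin 2) : (starRingEnd ℂ) (pauli i a b) = pauli i b a := by
  rcases i with _ | _ | _ | _ | i <;> fin_cases a <;> fin_cases b <;> simp [pauli]

lemma pauli_sq (i : ℕ) : pauli i * pauli i = 1 := by
  rcases i with _ | _ | _ | _ | i <;> ext a b <;> fin_cases a <;> fin_cases b <;>
    simp [pauli, Matrix.mul_apply, Fin.sum_univ_two]

lemma pauli_zero : pauli 0 = 1 := rfl

lemma pauli_anti : pauli 1 * pauli 2 = - (pauli 2 * pauli 1) := by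
  ext a b ; fin_cases a <;> fin_cases b <;>
    simp [pauli, Matrix.mul_apply, Fin.sum_univ_two]

section kron
variable {ι : Type*} [Fintype ι] [DecidableEq ι]

open Matrix in
lemma kron_herm (f : ι → ℕ) : (kronOp f)ᴴ = kronOp f := by
  ext x y
  simp [kronOp, Matrix.conjTranspose_apply, pauli_herm]

lemma kron_mul (f g : ι → ℕ) (x y : ι → Fin 2) :
    (kronOp f * kronOp g) x y = ∏ k, (pauli (f k) * pauli (g k)) (x k) (y k) := by
  simp only [kronOp, Matrix.mul_apply, Matrix.of_apply, ← Finset.prod_mul_distrib]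
  rw [Finset.prod_univ_sum]
  simp

lemma kron_sq (f : ι → ℕ) : kronOp f * kronOp f = 1 := by
  ext x y
  rw [kron_mul]
  simp only [pauli_sq, Matrix.one_apply]
  by_cases h : x = y
  · subst h; simp
  · rw [if_neg h]
    obtain ⟨k, hk⟩ := Function.ne_iff.mp h
    exact Finset.prod_eq_zero (Finset.mem_univ k) (by simp [hk])

lemma kron_anti (f g : ι → ℕ) (q : ι)
    (hq : pauli (f q) * pauli (g q) = - (pauli (g q) * pauli (f q)))
    (h : ∀ p, p ≠ q → pauli (f p) * pauli (g p) = pauli (g p) * pauli (f p)) :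
    kronOp f * kronOp g = - (kronOp g * kronOp f) := by
  ext x y
  rw [Matrix.neg_apply, kron_mul, kron_mul, ← Finset.mul_prod_erase _ _ (Finset.mem_univ q),
    ← Finset.mul_prod_erase (Finset.univ) (fun k => (pauli (g k) * pauli (f k)) (x k) (y k))
      (Finset.mem_univ q), hq, Matrix.neg_apply, neg_mul]
  congr 2
  refine Finset.prod_congr rfl fun p hp => ?_
  rw [h p (Finset.ne_of_mem_erase hp)]

lemma trace_eq_ex (ψ : (ι → Fin 2) → ℂ) (A : Matrix (ι → Fin 2) (ι → Fin 2) ℂ) :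
    (pureDensity ψ * A).trace = ex ψ A := by
  simp only [Matrix.trace, Matrix.diag, Matrix.mul_apply, pureDensity, Matrix.of_apply, ex,
    dotProduct, Matrix.mulVec, Finset.mul_sum]
  rw [Finset.sum_comm]
  refine Finset.sum_congr rfl fun x _ => Finset.sum_congr rfl fun y _ => ?_
  simp
  ring

/-- The index function of a two-body operator. -/
def two (k l : ι) (i j : ℕ) : ι → ℕ := fun q => if q = k then i else if q = l then j else 0

lemma corr_eq (ψ : (ι → Fin 2) → ℂ) (k l : ι) (i j : ℕ) :
    corr (pureDensity ψ) k l i j = (ex ψ (kronOp (two k l i j))).re := by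
  rw [corr, trace_eq_ex]; rfl

lemma ex_one (ψ : (ι → Fin 2) → ℂ) (hψ : UnitVec ψ) : ex ψ 1 = 1 := by
  unfold UnitVec at hψ
  simp only [ex, Matrix.one_mulVec, dotProduct, Pi.star_apply]
  rw [← Complex.ofReal_one, ← hψ, Complex.ofReal_sum]
  refine Finset.sum_congr rfl fun x _ => ?_
  rw [Complex.normSq_eq_conj_mul_self]; rfl

lemma two_anti_l (k l : ι) (i : ℕ) (hkl : k ≠ l) :
    kronOp (two k l i 1) * kronOp (two k l i 2)
      = - (kronOp (two k l i 2) * kronOp (two k l i 1)) := by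
  apply kron_anti _ _ l
  · simp [two, hkl.symm, pauli_anti]
  · intro p hp
    simp [two, hp]

lemma two_anti_k (k l r : ι) (a b : ℕ) (hlr : l ≠ r) :
    kronOp (two k l 1 a) * kronOp (two k r 2 b)
      = - (kronOp (two k r 2 b) * kronOp (two k l 1 a)) := by
  apply kron_anti _ _ k
  · simp [two, pauli_anti]
  · intro p hp
    by_cases h : p = l
    · have : p ≠ r := by rw [h]; exact hlr
      simp [two, hp, this, pauli_zero]
    · simp [two, hp, h, pauli_zero]

lemma neg_flip {R : Type*} [Ring R] {a b : R} (h : a * b = -(b * a)) : b * a = -(a * b) := by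
  rw [h, neg_neg]

lemma half_bound (ψ : (ι → Fin 2) → ℂ) (hψ : UnitVec ψ) (k l r : ι)
    (hkl : k ≠ l) (hkr : k ≠ r) (hlr : l ≠ r) :
    corr (pureDensity ψ) k l 1 1 ^ 2 + corr (pureDensity ψ) k l 1 2 ^ 2
      + corr (pureDensity ψ) k r 2 1 ^ 2 + corr (pureDensity ψ) k r 2 2 ^ 2 ≤ 1 := by
  have h := bessel ψ (ex_one ψ hψ)
    ![kronOp (two k l 1 1), kronOp (two k l 1 2), kronOp (two k r 2 1), kronOp (two k r 2 2)]
    (by intro i; fin_cases i <;> exact kron_herm _)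
    (by intro i; fin_cases i <;> exact kron_sq _)
    (by
      intro i j hij
      have A := two_anti_l k l 1 hkl
      have B := two_anti_l k r 2 hkr
      have C := fun a b => two_anti_k k l r a b hlr
      fin_cases i <;> fin_cases j
      · exact absurd rfl hij
      · exact A
      · exact (C 1 1)
      · exact (C 1 2)
      · exact neg_flip A
      · exact absurd rfl hij
      · exact (C 2 1)
      · exact (C 2 2)
      · exact neg_flip (C 1 1)
      · exact neg_flip (C 2 1)
      · exact absurd rfl hij
      · exact B
      · exact neg_flip (C 1 2)
      · exact neg_flip (C 2 2)
      · exact neg_flip B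
      · exact absurd rfl hij)
  simpa [Fin.sum_univ_four, corr_eq] using h

lemma Mkl_eq (ρ : Matrix (ι → Fin 2) (ι → Fin 2) ℂ) (k l : ι) :
    Mkl ρ k l = corr ρ k l 1 1 ^ 2 + corr ρ k l 1 2 ^ 2
      + (corr ρ k l 2 1 ^ 2 + corr ρ k l 2 2 ^ 2) := by
  have : Finset.Icc 1 2 = ({1, 2} : Finset ℕ) := rfl
  simp [Mkl, this]

lemma Mkl_nonneg (ρ : Matrix (ι → Fin 2) (ι → Fin 2) ℂ) (k l : ι) : 0 ≤ Mkl ρ k l := by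
  rw [Mkl_eq]; positivity

lemma pair_bound (ψ : (ι → Fin 2) → ℂ) (hψ : UnitVec ψ) (k l r : ι)
    (hkl : k ≠ l) (hkr : k ≠ r) (hlr : l ≠ r) :
    Mkl (pureDensity ψ) k l + Mkl (pureDensity ψ) k r ≤ 2 := by
  have h1 := half_bound ψ hψ k l r hkl hkr hlr
  have h2 := half_bound ψ hψ k r l hkr hkl hlr.symm
  rw [Mkl_eq, Mkl_eq]
  linarith

lemma two_comm (k l : ι) (i j : ℕ) (h : k ≠ l) : two k l i j = two l k j i := by
  funext q
  unfold two
  by_cases h1 : q = k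
  · have : q ≠ l := by rw [h1]; exact h
    simp [h1, h]
  · simp [h1]

lemma Mkl_comm (ψ : (ι → Fin 2) → ℂ) (k l : ι) (h : k ≠ l) :
    Mkl (pureDensity ψ) k l = Mkl (pureDensity ψ) l k := by
  simp only [Mkl_eq, corr_eq, two_comm k l _ _ h]
  ring

/-- Row bound: the sum over a set of `a` qubits different from `k` is at most `a + 1`. -/
lemma row_bound (ψ : (ι → Fin 2) → ℂ) (hψ : UnitVec ψ) (hc : 3 ≤ Fintype.card ι) (k : ι)
    (S : Finset ι) (hk : k ∉ S) :
    ∑ l ∈ S, Mkl (pureDensity ψ) k l ≤ (S.card : ℝ) + 1 := by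
  by_cases h : ∃ l ∈ S, 1 < Mkl (pureDensity ψ) k l
  · obtain ⟨l, hl, h1⟩ := h
    have hkl : k ≠ l := fun e => hk (e ▸ hl)
    have hr : ∃ r, r ∉ ({k, l} : Finset ι) := by
      by_contra! hcon
      have := Finset.card_le_card (fun x _ => hcon x : (Finset.univ : Finset ι) ⊆ {k, l})
      have h2 := Finset.card_le_two (a := k) (b := l)
      rw [Finset.card_univ] at this
      omega
    obtain ⟨r, hr⟩ := hr
    simp only [Finset.mem_insert, Finset.mem_singleton, not_or] at hr
    have h2 := pair_bound ψ hψ k l r hkl (Ne.symm hr.1) (Ne.symm hr.2)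
    have h3 := Mkl_nonneg (pureDensity ψ) k r
    rw [← Finset.add_sum_erase _ _ hl]
    have h4 : ∑ x ∈ S.erase l, Mkl (pureDensity ψ) k x ≤ ∑ x ∈ S.erase l, (1 : ℝ) := by
      refine Finset.sum_le_sum fun x hx => ?_
      have hxl := Finset.ne_of_mem_erase hx
      have hkx : k ≠ x := fun e => hk (e ▸ Finset.mem_of_mem_erase hx)
      have := pair_bound ψ hψ k l x hkl hkx hxl.symm
      linarith
    have h5 : ((S.erase l).card : ℝ) + 1 = S.card := by
      exact_mod_cast Finset.card_erase_add_one hl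
    rw [Finset.sum_const, nsmul_eq_mul, mul_one] at h4
    linarith
  · push Not at h
    have := Finset.sum_le_sum h
    simp at this
    linarith

end kron

/-- Bilinear version of expectation. -/
lemma ex_kron {ι : Type*} [Fintype ι] [DecidableEq ι] (ψ : (ι → Fin 2) → ℂ) (f : ι → ℕ) :
    ex ψ (kronOp f) = ∑ x, ∑ y, star (ψ x) * ψ y * ∏ q, pauli (f q) (x q) (y q) := by
  simp only [ex, dotProduct, Matrix.mulVec, Finset.mul_sum, kronOp, Matrix.of_apply, Pi.star_apply]
  refine Finset.sum_congr rfl fun x _ => Finset.sum_congr rfl fun y _ => ?_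
  ring

lemma restrict_bij {n k : ℕ} (P : Fin k → Finset (Fin n)) (hP : IsPartition P) :
    Function.Bijective (fun (x : Fin n → Fin 2) (b : Fin k) => restrictB (P b) x) := by
  obtain ⟨_, hd, hc⟩ := hP
  constructor
  · intro x y h
    funext q
    obtain ⟨b, hb⟩ := hc q
    exact congrFun (congrFun h b) ⟨q, hb⟩
  · intro u
    choose β hβ using hc
    refine ⟨fun q => u (β q) ⟨q, hβ q⟩, ?_⟩
    funext b q
    have : ∀ c (hc : (q : Fin n) ∈ P c), u c ⟨q, hc⟩ = u b q := by
      intro c hc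
      have : c = b := by
        by_contra hne
        exact Finset.disjoint_left.mp (hd c b hne) hc q.2
      subst this; rfl
    exact this _ _

lemma prod_blocks {n k : ℕ} (P : Fin k → Finset (Fin n)) (hP : IsPartition P)
    (g : Fin n → ℂ) : ∏ q, g q = ∏ b, ∏ q : ↥(P b), g q := by
  have hu : (Finset.univ : Finset (Fin n)) = Finset.univ.biUnion P := by
    ext q; simp [hP.2.2 q]
  rw [hu, Finset.prod_biUnion (fun a _ b _ hab => hP.2.1 a b hab)]
  refine Finset.prod_congr rfl fun b _ => ?_
  exact (Finset.prod_coe_sort (P b) g).symm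

lemma ex_prod {n k : ℕ} (P : Fin k → Finset (Fin n)) (hP : IsPartition P)
    (ψ : (Fin n → Fin 2) → ℂ) (φ : (m : Fin k) → ((↥(P m) → Fin 2) → ℂ))
    (h : ∀ f : Fin n → Fin 2, ψ f = ∏ m, φ m (restrictB (P m) f)) (f : Fin n → ℕ) :
    ex ψ (kronOp f) = ∏ b, ex (φ b) (kronOp (fun q : ↥(P b) => f q)) := by
  simp only [ex_kron]
  let G : (b : Fin k) → (↥(P b) → Fin 2) → (↥(P b) → Fin 2) → ℂ := fun b u v =>
    star (φ b u) * φ b v * ∏ q : ↥(P b), pauli (f q) (u q) (v q)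
  have hG : ∀ x y : Fin n → Fin 2,
      star (ψ x) * ψ y * ∏ q, pauli (f q) (x q) (y q)
        = ∏ b, G b (restrictB (P b) x) (restrictB (P b) y) := by
    intro x y
    rw [h, h, prod_blocks P hP, star_prod, ← Finset.prod_mul_distrib, ← Finset.prod_mul_distrib]
    rfl
  have hbij := restrict_bij P hP
  have e1 : ∏ b, ∑ u, ∑ v, G b u v
      = ∑ U : (b : Fin k) → (↥(P b) → Fin 2), ∑ V : (b : Fin k) → (↥(P b) → Fin 2),
        ∏ b, G b (U b) (V b) := by
    rw [Finset.prod_univ_sum, Fintype.piFinset_univ]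
    refine Finset.sum_congr rfl fun U _ => ?_
    rw [Finset.prod_univ_sum, Fintype.piFinset_univ]
  change _ = ∏ b, ∑ u, ∑ v, G b u v
  rw [e1, ← hbij.sum_comp]
  refine Finset.sum_congr rfl fun x _ => ?_
  rw [← hbij.sum_comp]
  exact Finset.sum_congr rfl fun y _ => hG x y

lemma kron_zero {ι : Type*} [Fintype ι] [DecidableEq ι] : kronOp (fun _ : ι => 0) = 1 := by
  have h := kron_sq (fun _ : ι => 0)
  ext x y
  rw [← h, kron_mul]
  simp [kronOp, pauli_zero]

lemma cross_zero {n k : ℕ} (P : Fin k → Finset (Fin n)) (hP : IsPartition P)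
    (ψ : (Fin n → Fin 2) → ℂ) (hpb : PreferredBasis (pureDensity ψ))
    (φ : (m : Fin k) → ((↥(P m) → Fin 2) → ℂ)) (hφ : ∀ m, UnitVec (φ m))
    (h : ∀ f : Fin n → Fin 2, ψ f = ∏ m, φ m (restrictB (P m) f))
    (b : Fin k) (p l : Fin n) (hp : p ∈ P b) (hl : l ∉ P b) :
    Mkl (pureDensity ψ) p l = 0 := by
  have hb : ∀ i, i = 1 ∨ i = 2 → ex (φ b) (kronOp (fun q : ↥(P b) => if (q : Fin n) = p then i else 0)) = 0 := by
    intro i hi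
    have h1 : (ex ψ (kronOp (fun q => if q = p then i else 0))).re = 0 := by
      rw [← trace_eq_ex]
      rcases hi with rfl | rfl
      · exact (hpb p).1
      · exact (hpb p).2
    have h2 := ex_star ψ (kronOp (fun q => if q = p then i else 0))
    rw [kron_herm] at h2
    have h3 : ex ψ (kronOp (fun q => if q = p then i else 0)) = 0 := by
      apply Complex.ext
      · simpa using h1
      · exact Complex.conj_eq_iff_im.mp h2
    rw [ex_prod P hP ψ φ h, Finset.prod_eq_single b] at h3
    · exact h3
    · intro c _ hcb
      have : (fun q : ↥(P c) => if (q : Fin n) = p then i else 0) = fun _ => 0 := by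
        funext q
        rw [if_neg]
        intro e
        exact Finset.disjoint_left.mp (hP.2.1 c b hcb) q.2 (e ▸ hp)
      rw [this, kron_zero, ex_one _ (hφ c)]
    · simp
  have hc : ∀ i j, i = 1 ∨ i = 2 → corr (pureDensity ψ) p l i j = 0 := by
    intro i j hi
    rw [corr_eq, ex_prod P hP ψ φ h, Finset.prod_eq_zero (Finset.mem_univ b), Complex.zero_re]
    rw [← hb i hi]
    congr 2
    funext q
    have : (q : Fin n) ≠ l := fun e => hl (e ▸ q.2)
    simp [two, this]
  rw [Mkl_eq]
  simp [hc]

/-- Proposition 6: for `n ≥ 5`, `1 ≤ m ≤ ⌊n/2⌋ - 1`, if a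
preferred-basis pure state satisfies `M(ρ_ψ) > C(m,2) + C(n-m,2) + δ_{m,2}`,
then `ψ` contains entanglement between at least `m+1` qubits: it is not a
product of pure states over any partition with all blocks of size at most `m`. -/
theorem entanglement_depth_of_Mtot_gt (n : ℕ) (hn : 5 ≤ n)
    (ψ : (Fin n → Fin 2) → ℂ) (hψ : UnitVec ψ)
    (hpb : PreferredBasis (pureDensity ψ))
    (m : ℕ) (hm1 : 1 ≤ m) (hm2 : m ≤ n / 2 - 1)
    (hM : Mtot (pureDensity ψ)
      > (m.choose 2 : ℝ) + ((n - m).choose 2 : ℝ) + (if m = 2 then 1 else 0)) :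
    ¬ ∃ (k : ℕ) (P : Fin k → Finset (Fin n)),
        IsPartition P ∧ (∀ b, (P b).card ≤ m) ∧ IsProductOver ψ P := by
  rintro ⟨k, P, hP, hcard, φ, hφ, h⟩
  have hrow : ∀ p : Fin n, ∑ l ∈ Finset.univ.erase p, Mkl (pureDensity ψ) p l ≤ m := by
    intro p
    obtain ⟨b, hb⟩ := hP.2.2 p
    have e : ∑ l ∈ (P b).erase p, Mkl (pureDensity ψ) p l
        = ∑ l ∈ Finset.univ.erase p, Mkl (pureDensity ψ) p l := by
      apply Finset.sum_subset (Finset.erase_subset_erase _ (Finset.subset_univ _))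
      intro l hl hl'
      have hlb : l ∉ P b := fun hh => hl' (Finset.mem_erase.mpr ⟨Finset.ne_of_mem_erase hl, hh⟩)
      exact cross_zero P hP ψ hpb φ hφ h b p l hb hlb
    rw [← e]
    refine (row_bound ψ hψ (by simp; omega) p _ (Finset.notMem_erase _ _)).trans ?_
    have h1 := Finset.card_erase_add_one hb
    have h2 := hcard b
    exact_mod_cast (h1.trans_le h2)
  have htot : 2 * Mtot (pureDensity ψ) = ∑ p, ∑ l ∈ Finset.univ.erase p, Mkl (pureDensity ψ) p l := by
    have e1 : Mtot (pureDensity ψ) = ∑ p, ∑ l, if p < l then Mkl (pureDensity ψ) p l else 0 := by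
      rw [Mtot, Finset.sum_filter, Fintype.sum_prod_type]
    have e2 : Mtot (pureDensity ψ) = ∑ p, ∑ l, if l < p then Mkl (pureDensity ψ) p l else 0 := by
      rw [e1, Finset.sum_comm]
      refine Finset.sum_congr rfl fun p _ => Finset.sum_congr rfl fun l _ => ?_
      split_ifs with hh
      · exact Mkl_comm ψ _ _ hh.ne
      · rfl
    rw [two_mul]
    nth_rewrite 1 [e1]
    rw [e2, ← Finset.sum_add_distrib]
    refine Finset.sum_congr rfl fun p _ => ?_
    rw [← Finset.sum_add_distrib, ← Finset.filter_ne', Finset.sum_filter]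
    refine Finset.sum_congr rfl fun l _ => ?_
    rcases lt_trichotomy p l with hh | hh | hh
    · simp [hh, hh.ne', hh.not_gt]
    · simp [hh]
    · simp [hh, hh.ne, hh.not_gt]
  have hsum : 2 * Mtot (pureDensity ψ) ≤ (n : ℝ) * m := by
    rw [htot]
    refine (Finset.sum_le_sum fun p _ => hrow p).trans ?_
    simp
  obtain ⟨t, rfl⟩ : ∃ t, n = m + (m + 2 + t) := ⟨n - (m + (m + 2)), by omega⟩
  have hnm : m + (m + 2 + t) - m = m + 2 + t := by omega
  rw [hnm, Nat.cast_choose_two, Nat.cast_choose_two] at hM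
  have hd : (0 : ℝ) ≤ if m = 2 then 1 else 0 := by split_ifs <;> norm_num
  push_cast at hM hsum
  have ht : (0 : ℝ) ≤ t := Nat.cast_nonneg t
  have hm0 : (0 : ℝ) ≤ m := Nat.cast_nonneg m
  nlinarith [mul_nonneg ht hm0, mul_nonneg ht ht]
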